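/- Let R be a commutative ring, S a multiplicative subset of R, and M an R-module such that tor_S(M) is u-S-torsion. For every submodule K of M there exists a submodule K' of M that is maximal (with respect to inclusion) among submodules N of M such that K ⊓ N is u-S-torsion; moreover, any such K' satisfies: (1) K + K' is u-S-essential in M, and (2) the submodule (K + K')/K' of M/K' is u-S-essential in M/K'. -/

import Mathlib

/-!
A uniform bound on the `S`-torsion of `K` turns "`K ⊓ N` is u-S-torsion" into the inclusion
`K ⊓ N ≤ tor_S(M)`, which passes to directed unions because the submodule lattice is upper
continuous; Zorn's lemma then gives `K'`.

A submodule is u-S-torsion as soon as its image and its intersection with the kernel are, for any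
linear map. Hence if `L ≤ M ⧸ K'` has u-S-torsion intersection with `(K + K') / K'`, then the
preimage of `L` has u-S-torsion intersection with `K`, so that it is contained in `K'` by
maximality and `L = 0`. The same fact shows that preimages of u-S-essential submodules are
u-S-essential, and `K + K'` is the preimage of `(K + K') / K'`.
-/

/-- `K` is a uniformly `S`-essential submodule of `M`. -/
def USEssential {R : Type*} [CommRing R] (S : Submonoid R) {M : Type*}
    [AddCommGroup M] [Module R M] (K : Submodule R M) : Prop :=
  ∀ L : Submodule R M,
    (∃ s ∈ S, ∀ x ∈ K ⊓ L, s • x = 0) → ∃ s ∈ S, ∀ x ∈ L, s • x = 0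

/-- A submodule `N` of `M` is u-S-torsion: `s • N = 0` for some `s ∈ S`. -/
def IsUSTorsionSub {R : Type*} [CommRing R] (S : Submonoid R) {M : Type*}
    [AddCommGroup M] [Module R M] (N : Submodule R M) : Prop :=
  ∃ s ∈ S, ∀ x ∈ N, s • x = 0

theorem exists_maximal_inf_le {α : Type*} [CompleteLattice α] [IsCompactlyGenerated α] (a c : α) :
    ∃ b, Maximal (fun x => a ⊓ x ≤ c) b := by
  refine zorn_le₀ {x | a ⊓ x ≤ c} fun C hC hchain => ⟨sSup C, ?_, fun _ => le_sSup⟩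
  change a ⊓ sSup C ≤ c
  rw [hchain.directedOn.inf_sSup_eq]
  exact iSup₂_le hC

section

variable {R : Type*} [CommRing R] {S : Submonoid R} {M M' : Type*} [AddCommGroup M] [Module R M]
  [AddCommGroup M'] [Module R M'] {K K' N N' : Submodule R M}

namespace IsUSTorsionSub

theorem mono (hN' : IsUSTorsionSub S N') (h : N ≤ N') : IsUSTorsionSub S N := by
  obtain ⟨s, hs, hsN'⟩ := hN'
  exact ⟨s, hs, fun x hx => hsN' x (h hx)⟩

theorem bot : IsUSTorsionSub S (⊥ : Submodule R M) :=
  ⟨1, S.one_mem, by simp⟩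

theorem le_torsion' (hN : IsUSTorsionSub S N) : N ≤ Submodule.torsion' R M S := by
  obtain ⟨s, hs, hsN⟩ := hN
  exact fun x hx => ⟨⟨s, hs⟩, hsN x hx⟩

theorem inf_iff_le_torsion' (hK : IsUSTorsionSub S (K ⊓ Submodule.torsion' R M S)) :
    IsUSTorsionSub S (K ⊓ N) ↔ K ⊓ N ≤ Submodule.torsion' R M S :=
  ⟨le_torsion', fun h => hK.mono (le_inf inf_le_left h)⟩

theorem map (f : M →ₗ[R] M') (hN : IsUSTorsionSub S N) : IsUSTorsionSub S (N.map f) := by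
  obtain ⟨s, hs, hsN⟩ := hN
  refine ⟨s, hs, ?_⟩
  rintro _ ⟨x, hx, rfl⟩
  rw [← map_smul, hsN x hx, map_zero]

theorem of_map_of_inf_ker (f : M →ₗ[R] M') (hmap : IsUSTorsionSub S (N.map f))
    (hker : IsUSTorsionSub S (N ⊓ f.ker)) : IsUSTorsionSub S N := by
  obtain ⟨s, hs, hs_map⟩ := hmap
  obtain ⟨t, ht, ht_ker⟩ := hker
  refine ⟨t * s, S.mul_mem ht hs, fun x hx => ?_⟩
  have hsx : f (s • x) = 0 := by
    rw [map_smul, hs_map (f x) (Submodule.mem_map_of_mem hx)]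
  rw [mul_smul, ht_ker (s • x) ⟨N.smul_mem s hx, hsx⟩]

theorem exists_maximal_inf (hK : IsUSTorsionSub S (K ⊓ Submodule.torsion' R M S)) :
    ∃ K', Maximal (fun N => IsUSTorsionSub S (K ⊓ N)) K' := by
  simp only [hK.inf_iff_le_torsion']
  exact exists_maximal_inf_le K (Submodule.torsion' R M S)

end IsUSTorsionSub

namespace USEssential

theorem comap (f : M →ₗ[R] M') {P : Submodule R M'} (hP : USEssential S P) :
    USEssential S (P.comap f) := by
  intro L (hL : IsUSTorsionSub S (P.comap f ⊓ L))
  have hmap : IsUSTorsionSub S (L.map f) := by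
    refine hP _ (?_ : IsUSTorsionSub S (P ⊓ L.map f))
    rw [inf_comm, Submodule.map_inf_eq_map_inf_comap, inf_comm]
    exact hL.map f
  have hker : IsUSTorsionSub S (L ⊓ f.ker) :=
    hL.mono (le_inf (inf_le_right.trans (LinearMap.ker_le_comap f)) inf_le_left)
  exact hmap.of_map_of_inf_ker f hker

theorem map_mkQ_of_maximal (hK' : Maximal (fun N => IsUSTorsionSub S (K ⊓ N)) K') :
    USEssential S (K.map K'.mkQ) := by
  intro L (hL : IsUSTorsionSub S (K.map K'.mkQ ⊓ L))
  have hpreimage : IsUSTorsionSub S (K ⊓ L.comap K'.mkQ) := by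
    refine .of_map_of_inf_ker K'.mkQ ?_ ?_
    · rwa [← Submodule.map_inf_eq_map_inf_comap]
    · rw [Submodule.ker_mkQ]
      exact hK'.prop.mono (inf_le_inf_right K' inf_le_left)
  have hle : L.comap K'.mkQ ≤ K' := hK'.le_of_ge hpreimage (Submodule.le_comap_mkQ K' L)
  have hL_bot : L = ⊥ := by
    rw [eq_bot_iff, ← Submodule.map_comap_eq_of_surjective K'.mkQ_surjective L,
      ← Submodule.mkQ_map_self K']
    exact Submodule.map_mono hle
  exact hL_bot ▸ IsUSTorsionSub.bot

theorem sup_of_map_mkQ (h : USEssential S (K.map K'.mkQ)) : USEssential S (K ⊔ K') := by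
  have hcomap := h.comap K'.mkQ
  rwa [Submodule.comap_map_mkQ, sup_comm] at hcomap

end USEssential

theorem exists_maximal_uSTorsion_inter_general
    (hK : IsUSTorsionSub S (K ⊓ Submodule.torsion' R M S)) :
    (∃ K' : Submodule R M, Maximal (fun N => IsUSTorsionSub S (K ⊓ N)) K') ∧
    ∀ K' : Submodule R M, Maximal (fun N => IsUSTorsionSub S (K ⊓ N)) K' →
      USEssential S (K ⊔ K') ∧ USEssential S ((K ⊔ K').map K'.mkQ) := by
  refine ⟨hK.exists_maximal_inf, fun K' hK' => ?_⟩
  have hquot : USEssential S (K.map K'.mkQ) := .map_mkQ_of_maximal hK'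
  have hmap_sup : (K ⊔ K').map K'.mkQ = K.map K'.mkQ := by
    rw [Submodule.map_sup, Submodule.mkQ_map_self, sup_bot_eq]
  exact ⟨hquot.sup_of_map_mkQ, hmap_sup ▸ hquot⟩

end

/-- Theorem: if `tor_S(M)` is u-S-torsion, then for every submodule `K` of `M` there is
a submodule `K'` maximal with respect to "`K ⊓ K'` is u-S-torsion"; moreover every such
`K'` satisfies: (1) `K + K'` is u-S-essential in `M`, and
(2) `(K + K')/K'` is u-S-essential in `M/K'`. -/
theorem exists_maximal_uSTorsion_inter {R : Type*} [CommRing R] [Nontrivial R]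
    (S : Submonoid R) (hS0 : (0 : R) ∉ S) {M : Type*} [AddCommGroup M] [Module R M]
    (htor : ∃ s ∈ S, ∀ m : M, (∃ t ∈ S, t • m = 0) → s • m = 0)
    (K : Submodule R M) :
    (∃ K' : Submodule R M, Maximal (fun N => IsUSTorsionSub S (K ⊓ N)) K') ∧
    ∀ K' : Submodule R M, Maximal (fun N => IsUSTorsionSub S (K ⊓ N)) K' →
      USEssential S (K ⊔ K') ∧ USEssential S ((K ⊔ K').map K'.mkQ) := by
  obtain ⟨s, hs, hs_tor⟩ := htor
  exact exists_maximal_uSTorsion_inter_general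
    ⟨s, hs, fun m ⟨_, t, ht⟩ => hs_tor m ⟨t, t.2, ht⟩⟩
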